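/- In the free group F = ⟨y_1, …, y_s⟩ with s ≥ 2, the elements y_1, …, y_s together with the products y_i y_l and y_i y_l^{-1} for all i < l determine the lengths: if a point of (unprojectivized) outer space for F is a metric rose on which every y_i has translation length 1 and every y_i y_l and y_i y_l^{-1} (i < l) has translation length 2, then every petal has length 1 (the rose is the standard unit rose up to isometry). -/

import Mathlib

/-- The length of (the reduced word of) `g` in a metric rose for the free group
`F_s` whose petals have lengths `l 1, …, l s`. -/
noncomputable def roseWordLength {S : ℕ} (l : Fin S → ℝ) (g : FreeGroup (Fin S)) : ℝ :=
  ((FreeGroup.toWord g).map fun p => l p.1).sum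

/-- The translation length of `g` on the metric rose with petal lengths `l`:
the infimum of the lengths of the conjugates of `g` (the length of the
cyclically reduced representative of the conjugacy class of `g`). -/
noncomputable def roseTransLength {S : ℕ} (l : Fin S → ℝ) (g : FreeGroup (Fin S)) : ℝ :=
  sInf (Set.range fun h : FreeGroup (Fin S) => roseWordLength l (h * g * h⁻¹))

/-!
Work in the Cayley tree of the free group, with edges weighted by the petal lengths. For two
elements `u`, `v`, the equations `τ (u v) = τ (u v⁻¹) = τ u + τ v` say that their axes meet in
exactly one point, whereas disjoint axes force `τ (u v) > τ u + τ v`. Conjugate so that the axes of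
two of the generators cross at the base point. An axis that meets both of them but misses the base
point would lie in a direction from the base point shared by both, but they share none; hence all
axes pass through the base point. Then there is no cancellation in any reduced word in the
conjugated generators, so a petal, being a word of length one, must be a conjugated generator or
its inverse.
-/

namespace MetricRose

open FreeGroup

variable {α ι : Type*} [DecidableEq α] {l : α → ℝ} {a b g u v w : FreeGroup α} {x : α × Bool}

/-- The length of the reduced word of `g` when the letter `a` has length `l a`; this is
`roseWordLength` over an arbitrary alphabet. -/
noncomputable def wordLength (l : α → ℝ) (g : FreeGroup α) : ℝ :=
  (g.toWord.map fun p => l p.1).sum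

/-- The translation length of `g` on the Cayley tree whose edges labelled `a` have length `l a`;
this is `roseTransLength` over an arbitrary alphabet. -/
noncomputable def translationLength (l : α → ℝ) (g : FreeGroup α) : ℝ :=
  ⨅ h : FreeGroup α, wordLength l (h * g * h⁻¹)

theorem roseTransLength_eq_translationLength {S : ℕ} (l : Fin S → ℝ) (g : FreeGroup (Fin S)) :
    roseTransLength l g = translationLength l g :=
  rfl

/-- The first letter of the reduced word of `g`: the direction in which the geodesic from the base
point to `g` leaves the base point of the Cayley tree. -/
def initialLetter (g : FreeGroup α) : Option (α × Bool) :=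
  g.toWord.head?

/-- The product `a * b` involves no cancellation. The last letter of `a` is encoded as the initial
letter of `a⁻¹`, so that in the Cayley tree the condition says that the geodesics from the base
point to `a⁻¹` and to `b` leave in different directions. For `a = b` it says that `a` is cyclically
reduced, i.e. that its axis passes through the base point. -/
def NoCancel (a b : FreeGroup α) : Prop :=
  ∀ x, initialLetter a⁻¹ = some x → initialLetter b ≠ some x

/-! ### Letters and cancellation -/

theorem initialLetter_one : initialLetter (1 : FreeGroup α) = none :=
  rfl

theorem toWord_eq_cons_of_initialLetter (h : initialLetter g = some x) :
    g.toWord = x :: ((mk [x])⁻¹ * g).toWord := by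
  obtain ⟨L, hL⟩ := List.head?_eq_some_iff.1 h
  have hred : IsReduced L := (hL ▸ isReduced_toWord (x := g) : IsReduced (x :: L)).tail
  have hg : (mk [x])⁻¹ * g = mk L := by
    rw [inv_mul_eq_iff_eq_mul, mul_mk, ← mk_toWord (x := g), hL, List.singleton_append]
  rw [hL, hg, toWord_mk, hred.reduce_eq]

theorem initialLetter_inv_mul_inv (h : initialLetter g = some x) (h' : initialLetter g⁻¹ = some x) :
    initialLetter ((mk [x])⁻¹ * g)⁻¹ = some x := by
  have hword : g⁻¹.toWord = ((mk [x])⁻¹ * g)⁻¹.toWord ++ [(x.1, !x.2)] := by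
    rw [toWord_inv, toWord_eq_cons_of_initialLetter h, invRev_cons, ← toWord_inv]
    rfl
  rw [initialLetter, hword, List.head?_append] at h'
  cases hhead : initialLetter ((mk [x])⁻¹ * g)⁻¹ <;>
    simp_all [initialLetter, Prod.ext_iff]

theorem toWord_eq_cons_append_of_initialLetter (h : initialLetter g = some x)
    (h' : initialLetter g⁻¹ = some x) :
    g.toWord = x :: (((mk [x])⁻¹ * g * mk [x]).toWord ++ [(x.1, !x.2)]) := by
  have hinv := toWord_eq_cons_of_initialLetter (initialLetter_inv_mul_inv h h')
  have hconj : (mk [x])⁻¹ * g * mk [x] = ((mk [x])⁻¹ * ((mk [x])⁻¹ * g)⁻¹)⁻¹ := by group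
  calc g.toWord
      = x :: ((mk [x])⁻¹ * g).toWord := toWord_eq_cons_of_initialLetter h
    _ = x :: invRev ((mk [x])⁻¹ * g)⁻¹.toWord := by rw [← toWord_inv, inv_inv]
    _ = x :: (((mk [x])⁻¹ * g * mk [x]).toWord ++ [(x.1, !x.2)]) := by
        rw [hinv, invRev_cons, ← toWord_inv, ← hconj]
        rfl

theorem NoCancel.toWord_mul (h : NoCancel a b) : (a * b).toWord = a.toWord ++ b.toWord := by
  rw [FreeGroup.toWord_mul]
  refine IsReduced.reduce_eq (List.IsChain.append isReduced_toWord isReduced_toWord ?_)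
  intro y hy z hz hyz
  by_contra hne
  have hz' : z = (y.1, !y.2) := Prod.ext hyz.symm (Bool.eq_not_of_ne (Ne.symm hne))
  refine h z ?_ hz
  simp [initialLetter, toWord_inv, invRev, Option.mem_def.1 hy, hz']

theorem NoCancel.initialLetter_mul (h : NoCancel a b) (ha : a ≠ 1) :
    initialLetter (a * b) = initialLetter a := by
  rw [initialLetter, h.toWord_mul, List.head?_append_of_ne_nil _ (by simpa using ha), initialLetter]

theorem NoCancel.symm_inv (h : NoCancel a b) : NoCancel b⁻¹ a⁻¹ :=
  fun x hb ha => h x ha (by rwa [inv_inv] at hb)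

theorem exists_initialLetter_of_not_noCancel (h : ¬NoCancel a b) :
    ∃ x, initialLetter a⁻¹ = some x ∧ initialLetter b = some x := by
  simpa only [NoCancel, ne_eq, not_forall, not_not, exists_prop] using h

theorem NoCancel.pow_right (h : NoCancel g g) (n : ℕ) : NoCancel g (g ^ n) := by
  rcases eq_or_ne g 1 with rfl | hg
  · simpa using h
  induction n with
  | zero => simp [NoCancel, initialLetter_one]
  | succ n ih =>
    intro x hx
    rw [pow_succ', ih.initialLetter_mul hg]
    exact h x hx

theorem norm_conj_le_of_initialLetter (h : initialLetter g = some x) :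
    norm ((mk [x])⁻¹ * g * mk [x]) ≤ norm g :=
  calc norm ((mk [x])⁻¹ * g * mk [x])
      ≤ norm ((mk [x])⁻¹ * g) + norm (mk [x]) := norm_mul_le _ _
    _ ≤ norm ((mk [x])⁻¹ * g) + 1 := by gcongr; exact norm_mk_le
    _ = norm g := by simp [FreeGroup.norm, toWord_eq_cons_of_initialLetter h]

theorem norm_conj_le_of_initialLetter_inv (h : initialLetter g⁻¹ = some x) :
    norm ((mk [x])⁻¹ * g * mk [x]) ≤ norm g := by
  have hinv : (mk [x])⁻¹ * g * mk [x] = ((mk [x])⁻¹ * g⁻¹ * mk [x])⁻¹ := by group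
  rw [hinv, norm_inv_eq, ← norm_inv_eq (x := g)]
  exact norm_conj_le_of_initialLetter h

theorem norm_conj_lt_of_initialLetter (h : initialLetter g = some x)
    (h' : initialLetter g⁻¹ = some x) :
    norm ((mk [x])⁻¹ * g * mk [x]) < norm g := by
  simp only [FreeGroup.norm, toWord_eq_cons_append_of_initialLetter h h', List.length_cons,
    List.length_append]
  lia

/-! ### Word length -/

theorem wordLength_one : wordLength l 1 = 0 := by
  simp [wordLength]

theorem wordLength_of (i : α) : wordLength l (of i) = l i := by
  simp [wordLength]

theorem wordLength_nonneg (hl : ∀ i, 0 ≤ l i) (g : FreeGroup α) : 0 ≤ wordLength l g :=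
  List.sum_nonneg (List.forall_mem_map.2 fun p _ => hl p.1)

theorem wordLength_inv (g : FreeGroup α) : wordLength l g⁻¹ = wordLength l g := by
  simp [wordLength, toWord_inv, invRev, List.sum_reverse, Function.comp_def]

theorem wordLength_mul_le (hl : ∀ i, 0 ≤ l i) (a b : FreeGroup α) :
    wordLength l (a * b) ≤ wordLength l a + wordLength l b := by
  have hsub := (toWord_mul_sublist a b).map fun p => l p.1
  simpa [wordLength] using hsub.sum_le_sum (List.forall_mem_map.2 fun p _ => hl p.1)

theorem wordLength_pow_le (hl : ∀ i, 0 ≤ l i) (g : FreeGroup α) (n : ℕ) :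
    wordLength l (g ^ n) ≤ n * wordLength l g := by
  induction n with
  | zero => simp [wordLength_one]
  | succ n ih =>
    rw [pow_succ]
    push_cast
    linarith [wordLength_mul_le hl (g ^ n) g]

theorem wordLength_inv_mul_of_initialLetter (h : initialLetter g = some x) :
    wordLength l ((mk [x])⁻¹ * g) = wordLength l g - l x.1 := by
  simp [wordLength, toWord_eq_cons_of_initialLetter h]

theorem wordLength_conj_of_initialLetter (h : initialLetter g = some x)
    (h' : initialLetter g⁻¹ = some x) :
    wordLength l ((mk [x])⁻¹ * g * mk [x]) = wordLength l g - 2 * l x.1 := by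
  simp only [wordLength, toWord_eq_cons_append_of_initialLetter h h', List.map_cons,
    List.map_append, List.sum_cons, List.sum_append, List.map_nil, List.sum_nil]
  ring

theorem NoCancel.wordLength_mul (h : NoCancel a b) :
    wordLength l (a * b) = wordLength l a + wordLength l b := by
  simp [wordLength, h.toWord_mul]

theorem NoCancel.wordLength_pow (h : NoCancel g g) (n : ℕ) :
    wordLength l (g ^ n) = n * wordLength l g := by
  induction n with
  | zero => simp [wordLength_one]
  | succ n ih =>
    rw [pow_succ', (h.pow_right n).wordLength_mul, ih]
    push_cast
    ring

theorem noCancel_of_wordLength_add_le (hl : ∀ i, 0 < l i)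
    (h : wordLength l a + wordLength l b ≤ wordLength l (a * b)) : NoCancel a b := by
  intro x ha hb
  have hab : a * b = ((mk [x])⁻¹ * a⁻¹)⁻¹ * ((mk [x])⁻¹ * b) := by group
  have hle := wordLength_mul_le (fun i => (hl i).le) ((mk [x])⁻¹ * a⁻¹)⁻¹ ((mk [x])⁻¹ * b)
  rw [← hab, wordLength_inv, wordLength_inv_mul_of_initialLetter ha,
    wordLength_inv_mul_of_initialLetter hb, wordLength_inv] at hle
  linarith [hl x.1]

/-! ### Translation length -/

theorem translationLength_nonneg (hl : ∀ i, 0 ≤ l i) (g : FreeGroup α) :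
    0 ≤ translationLength l g :=
  Real.iInf_nonneg fun _ => wordLength_nonneg hl _

theorem translationLength_le_wordLength (hl : ∀ i, 0 ≤ l i) (g : FreeGroup α) :
    translationLength l g ≤ wordLength l g := by
  have hbdd : BddBelow (Set.range fun h => wordLength l (h * g * h⁻¹)) :=
    ⟨0, Set.forall_mem_range.2 fun _ => wordLength_nonneg hl _⟩
  simpa [translationLength] using ciInf_le hbdd 1

theorem translationLength_conj (g k : FreeGroup α) :
    translationLength l (k * g * k⁻¹) = translationLength l g :=
  (Equiv.mulRight k).iInf_congr fun h => congrArg (wordLength l) (by simp [mul_assoc])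

theorem translationLength_mul_comm (a b : FreeGroup α) :
    translationLength l (a * b) = translationLength l (b * a) := by
  rw [← translationLength_conj (b * a) a]
  congr 1
  group

theorem translationLength_inv (g : FreeGroup α) :
    translationLength l g⁻¹ = translationLength l g := by
  simp only [translationLength, ← conj_inv, wordLength_inv]

theorem wordLength_pow_le_conj (hl : ∀ i, 0 ≤ l i) (g k : FreeGroup α) (n : ℕ) :
    wordLength l (g ^ n) ≤ n * wordLength l (k * g * k⁻¹) + 2 * wordLength l k := by
  have hpow : g ^ n = k⁻¹ * (k * g * k⁻¹) ^ n * k := by rw [conj_pow]; group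
  calc wordLength l (g ^ n)
      ≤ wordLength l k⁻¹ + wordLength l ((k * g * k⁻¹) ^ n) + wordLength l k := by
        rw [hpow]
        exact (wordLength_mul_le hl _ _).trans (by gcongr; exact wordLength_mul_le hl _ _)
    _ ≤ n * wordLength l (k * g * k⁻¹) + 2 * wordLength l k := by
        rw [wordLength_inv]
        linarith [wordLength_pow_le hl (k * g * k⁻¹) n]

-- Conjugation by `k` changes the length of `g ^ n` by a bounded amount, but if it shortened `g`
-- then the lengths of the powers would drift apart linearly in `n`.
theorem NoCancel.translationLength_eq_wordLength (h : NoCancel g g) (hl : ∀ i, 0 ≤ l i) :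
    translationLength l g = wordLength l g := by
  refine (translationLength_le_wordLength hl g).antisymm (le_ciInf fun k => ?_)
  by_contra! hlt
  obtain ⟨n, hn⟩ := Archimedean.arch (2 * wordLength l k + 1) (sub_pos.2 hlt)
  rw [nsmul_eq_mul] at hn
  linarith [wordLength_pow_le_conj hl g k n, h.wordLength_pow (l := l) n]

theorem translationLength_lt_wordLength (hl : ∀ i, 0 < l i) (h : initialLetter g = some x)
    (h' : initialLetter g⁻¹ = some x) : translationLength l g < wordLength l g :=
  calc translationLength l g
      = translationLength l ((mk [x])⁻¹ * g * mk [x]) := by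
        simpa using (translationLength_conj g (mk [x])⁻¹).symm
    _ ≤ wordLength l g - 2 * l x.1 := by
        rw [← wordLength_conj_of_initialLetter h h']
        exact translationLength_le_wordLength (fun i => (hl i).le) _
    _ < wordLength l g := by linarith [hl x.1]

-- The axis of `u` lies beyond the edge `x` at the base point, that of `v` on the near side of it,
-- so the axes are disjoint.
theorem translationLength_add_lt_mul (hl : ∀ i, 0 < l i) (hu : initialLetter u = some x)
    (hu' : initialLetter u⁻¹ = some x) (hv : initialLetter v ≠ some x)
    (hv' : initialLetter v⁻¹ ≠ some x) (hv1 : v ≠ 1) :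
    translationLength l u + translationLength l v < translationLength l (u * v) := by
  have hl' i := (hl i).le
  have hu1 : u ≠ 1 := by rintro rfl; simp [initialLetter_one] at hu
  have huv : NoCancel u v := fun y hy => by rwa [← hy, hu']
  have hred : NoCancel (u * v) (u * v) := by
    intro y hy
    rw [mul_inv_rev, huv.symm_inv.initialLetter_mul (inv_ne_one.2 hv1)] at hy
    rwa [huv.initialLetter_mul hu1, hu, ← hy, ne_comm]
  rw [hred.translationLength_eq_wordLength hl', huv.wordLength_mul]
  linarith [translationLength_lt_wordLength hl hu hu', translationLength_le_wordLength hl' v]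

/-! ### Transverse elements -/

/-- The axes of `u` and `v` in the Cayley tree meet in exactly one point, expressed through
translation lengths (elements with trivial translation length being allowed). -/
structure Transverse (l : α → ℝ) (u v : FreeGroup α) : Prop where
  mul : translationLength l (u * v) = translationLength l u + translationLength l v
  mul_inv : translationLength l (u * v⁻¹) = translationLength l u + translationLength l v

namespace Transverse

theorem symm (h : Transverse l u v) : Transverse l v u where
  mul := by rw [translationLength_mul_comm, h.mul, add_comm]
  mul_inv := by
    rw [← translationLength_inv, mul_inv_rev, inv_inv, h.mul_inv, add_comm]

theorem inv_right (h : Transverse l u v) : Transverse l u v⁻¹ where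
  mul := by rw [h.mul_inv, translationLength_inv]
  mul_inv := by rw [inv_inv, h.mul, translationLength_inv]

theorem inv_left (h : Transverse l u v) : Transverse l u⁻¹ v :=
  h.symm.inv_right.symm

theorem conj (h : Transverse l u v) (k : FreeGroup α) :
    Transverse l (k * u * k⁻¹) (k * v * k⁻¹) where
  mul := by simp only [conj_mul, translationLength_conj, h.mul]
  mul_inv := by simp only [conj_inv, conj_mul, translationLength_conj, h.mul_inv]

theorem noCancel (h : Transverse l u v) (hl : ∀ i, 0 < l i) (hu : NoCancel u u)
    (hv : NoCancel v v) : NoCancel u v := by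
  have hl' i := (hl i).le
  apply noCancel_of_wordLength_add_le hl
  rw [← hu.translationLength_eq_wordLength hl', ← hv.translationLength_eq_wordLength hl', ← h.mul]
  exact translationLength_le_wordLength hl' _

end Transverse

/-! ### A common point of all axes -/

theorem exists_norm_conj_add_lt (hl : ∀ i, 0 < l i)
    (huv : translationLength l (u * v) ≤ translationLength l u + translationLength l v)
    (hu : ¬NoCancel u u) :
    ∃ k, norm (k * u * k⁻¹) + norm (k * v * k⁻¹) < norm u + norm v := by
  obtain ⟨x, hx', hx⟩ := exists_initialLetter_of_not_noCancel hu
  have hv : norm ((mk [x])⁻¹ * v * mk [x]) ≤ norm v := by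
    by_contra! hlt
    refine huv.not_gt (translationLength_add_lt_mul hl hx hx' ?_ ?_ ?_)
    · exact fun h => hlt.not_ge (norm_conj_le_of_initialLetter h)
    · exact fun h => hlt.not_ge (norm_conj_le_of_initialLetter_inv h)
    · rintro rfl
      rw [mul_one, inv_mul_cancel] at hlt
      exact hlt.false
  have hnorm := norm_conj_lt_of_initialLetter hx hx'
  exact ⟨(mk [x])⁻¹, by simpa using add_lt_add_of_lt_of_le hnorm hv⟩

theorem exists_conj_noCancel (hl : ∀ i, 0 < l i)
    (huv : translationLength l (u * v) ≤ translationLength l u + translationLength l v) :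
    ∃ h, NoCancel (h * u * h⁻¹) (h * u * h⁻¹) ∧ NoCancel (h * v * h⁻¹) (h * v * h⁻¹) := by
  let size (h : FreeGroup α) : ℕ := norm (h * u * h⁻¹) + norm (h * v * h⁻¹)
  have hmin (k) : size (Function.argmin size) ≤ size (k * Function.argmin size) :=
    Function.argmin_le size _
  generalize Function.argmin size = h at hmin
  have hassoc (k g : FreeGroup α) : k * h * g * (k * h)⁻¹ = k * (h * g * h⁻¹) * k⁻¹ := by group
  simp only [size, hassoc] at hmin
  refine ⟨h, ?_, ?_⟩ <;> by_contra hcancel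
  · obtain ⟨k, hk⟩ := exists_norm_conj_add_lt (v := h * v * h⁻¹) hl
      (by simpa only [conj_mul, translationLength_conj] using huv) hcancel
    exact hk.not_ge (hmin k)
  · obtain ⟨k, hk⟩ := exists_norm_conj_add_lt (v := h * u * h⁻¹) hl
      (by simpa only [conj_mul, translationLength_conj, add_comm,
        translationLength_mul_comm v u] using huv) hcancel
    rw [add_comm, add_comm (norm (h * v * h⁻¹))] at hk
    exact hk.not_ge (hmin k)

theorem initialLetter_eq_or_of_transverse (hl : ∀ i, 0 < l i) (h : Transverse l w u) (hu1 : u ≠ 1)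
    (hx : initialLetter w = some x) (hx' : initialLetter w⁻¹ = some x) :
    initialLetter u = some x ∨ initialLetter u⁻¹ = some x := by
  by_contra! hne
  exact (translationLength_add_lt_mul hl hx hx' hne.1 hne.2 hu1).ne' h.mul

theorem Transverse.noCancel_self_of_transverse (huv : Transverse l u v) (hwu : Transverse l w u)
    (hwv : Transverse l w v) (hl : ∀ i, 0 < l i) (hu : NoCancel u u) (hv : NoCancel v v)
    (hu1 : u ≠ 1) (hv1 : v ≠ 1) : NoCancel w w := by
  by_contra hcancel
  obtain ⟨x, hx', hx⟩ := exists_initialLetter_of_not_noCancel hcancel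
  rcases initialLetter_eq_or_of_transverse hl hwu hu1 hx hx' with hux | hux <;>
    rcases initialLetter_eq_or_of_transverse hl hwv hv1 hx hx' with hvx | hvx
  · exact huv.inv_left.noCancel hl hu.symm_inv hv x (by rwa [inv_inv]) hvx
  · exact huv.inv_left.inv_right.noCancel hl hu.symm_inv hv.symm_inv x (by rwa [inv_inv]) hvx
  · exact huv.noCancel hl hu hv x hux hvx
  · exact huv.inv_right.noCancel hl hu hv.symm_inv x hux hvx

theorem exists_conj_forall_noCancel {u : ι → FreeGroup α} (hl : ∀ i, 0 < l i) (hu1 : ∀ i, u i ≠ 1)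
    (hu : Pairwise fun i j => Transverse l (u i) (u j)) :
    ∃ h, ∀ i, NoCancel (h * u i * h⁻¹) (h * u i * h⁻¹) := by
  rcases subsingleton_or_nontrivial ι with hι | hι
  · rcases isEmpty_or_nonempty ι with _ | ⟨⟨i⟩⟩
    · exact ⟨1, isEmptyElim⟩
    obtain ⟨h, hi, -⟩ := exists_conj_noCancel (u := u i) (v := 1) hl
      (by simpa using translationLength_nonneg (fun i => (hl i).le) 1)
    exact ⟨h, fun j => Subsingleton.elim i j ▸ hi⟩
  · obtain ⟨i, j, hij⟩ := exists_pair_ne ι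
    obtain ⟨h, hi, hj⟩ := exists_conj_noCancel hl (hu hij).mul.le
    refine ⟨h, fun k => ?_⟩
    rcases eq_or_ne k i with rfl | hki
    · exact hi
    rcases eq_or_ne k j with rfl | hkj
    · exact hj
    exact ((hu hij).conj h).noCancel_self_of_transverse ((hu hki).conj h) ((hu hkj).conj h) hl hi hj
      (by simpa using hu1 i) (by simpa using hu1 j)

/-! ### Reduced words in generators without cancellation -/

/-- The value of the letter `p` under `FreeGroup.lift v`, that is `v i` or `(v i)⁻¹`. -/
def signedGenerator {G : Type*} [Group G] (v : ι → G) (p : ι × Bool) : G :=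
  cond p.2 (v p.1) (v p.1)⁻¹

theorem signedGenerator_ne_one {G : Type*} [Group G] {v : ι → G} (hv1 : ∀ i, v i ≠ 1)
    (p : ι × Bool) : signedGenerator v p ≠ 1 := by
  rcases p with ⟨i, _ | _⟩ <;> simpa [signedGenerator] using hv1 i

section Family

variable {v : ι → FreeGroup α}

theorem wordLength_signedGenerator (v : ι → FreeGroup α) (p : ι × Bool) :
    wordLength l (signedGenerator v p) = wordLength l (v p.1) := by
  rcases p with ⟨i, _ | _⟩ <;> simp [signedGenerator, wordLength_inv]

theorem noCancel_signedGenerator (hl : ∀ i, 0 < l i) (hred : ∀ i, NoCancel (v i) (v i))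
    (hv : Pairwise fun i j => Transverse l (v i) (v j)) {p q : ι × Bool}
    (hpq : p.1 = q.1 → p.2 = q.2) : NoCancel (signedGenerator v p) (signedGenerator v q) := by
  have hself (p) : NoCancel (signedGenerator v p) (signedGenerator v p) := by
    rcases p with ⟨i, _ | _⟩
    exacts [(hred i).symm_inv, hred i]
  rcases eq_or_ne p.1 q.1 with heq | hne
  · obtain rfl : p = q := Prod.ext heq (hpq heq)
    exact hself p
  · have htrans : Transverse l (signedGenerator v p) (signedGenerator v q) := by
      have h := hv hne
      rcases p with ⟨i, _ | _⟩ <;> rcases q with ⟨j, _ | _⟩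
      exacts [h.inv_left.inv_right, h.inv_left, h.inv_right, h]
    exact htrans.noCancel hl (hself p) (hself q)

theorem toWord_lift_mk (hv1 : ∀ i, v i ≠ 1)
    (hv : ∀ p q : ι × Bool, (p.1 = q.1 → p.2 = q.2) →
      NoCancel (signedGenerator v p) (signedGenerator v q))
    {L : List (ι × Bool)} (hL : IsReduced L) :
    (lift v (mk L)).toWord = L.flatMap fun p => (signedGenerator v p).toWord := by
  induction L with
  | nil => simp
  | cons p L ih =>
    have ih := ih hL.tail
    have hcons : lift v (mk (p :: L)) = signedGenerator v p * lift v (mk L) := by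
      simp [lift_mk, signedGenerator]
    have hp : NoCancel (signedGenerator v p) (lift v (mk L)) := by
      intro x hx
      cases L with
      | nil => simp [initialLetter]
      | cons q L =>
        have hq : (signedGenerator v q).toWord ≠ [] := by
          simpa using signedGenerator_ne_one hv1 q
        rw [initialLetter, ih, List.flatMap_cons, List.head?_append_of_ne_nil _ hq]
        exact hv p q (List.isChain_cons_cons.1 hL).1 x hx
    rw [hcons, hp.toWord_mul, ih, List.flatMap_cons]

theorem exists_signedGenerator_eq_of (hv1 : ∀ i, v i ≠ 1)
    (hv : ∀ p q : ι × Bool, (p.1 = q.1 → p.2 = q.2) →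
      NoCancel (signedGenerator v p) (signedGenerator v q))
    (hsurj : Function.Surjective (lift v)) (i : α) : ∃ p, signedGenerator v p = of i := by
  classical
  obtain ⟨w, hw⟩ := hsurj (of i)
  have hword := toWord_lift_mk hv1 hv (isReduced_toWord (x := w))
  rw [mk_toWord, hw, toWord_of] at hword
  have hpos (p) : 0 < (signedGenerator v p).toWord.length := by
    simpa [List.length_pos_iff] using signedGenerator_ne_one hv1 p
  match w.toWord, hword with
  | [p], hword => exact ⟨p, toWord_injective (by simpa using hword.symm)⟩
  | p :: q :: _, hword =>
    have hlen := congrArg List.length hword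
    simp only [List.flatMap_cons, List.length_append, List.length_singleton] at hlen
    have := hpos p
    have := hpos q
    lia

end Family

theorem surjective_lift_conj {G : Type*} [Group G] {φ : FreeGroup ι →* G}
    (hφ : Function.Surjective φ) (h : G) :
    Function.Surjective (lift fun i => h * φ (of i) * h⁻¹) := by
  have hcomp : lift (fun i => h * φ (of i) * h⁻¹) = (MulAut.conj h).toMonoidHom.comp φ := by
    ext i
    simp
  rw [hcomp]
  exact (MulAut.conj h).surjective.comp hφ

end MetricRose

open MetricRose FreeGroup in
theorem stmt_15_general {α ι : Type*} [DecidableEq α] {l : α → ℝ} (hl : ∀ i, 0 < l i)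
    (φ : FreeGroup ι →* FreeGroup α) (hφ : Function.Surjective φ) (hφ1 : ∀ i, φ (of i) ≠ 1)
    (htrans : Pairwise fun i j => Transverse l (φ (of i)) (φ (of j))) (k : α) :
    ∃ i, l k = translationLength l (φ (of i)) := by
  obtain ⟨h, hred⟩ := exists_conj_forall_noCancel hl hφ1 htrans
  obtain ⟨p, hp⟩ := exists_signedGenerator_eq_of (v := fun i => h * φ (of i) * h⁻¹)
    (fun i => by simpa using hφ1 i)
    (fun p q => noCancel_signedGenerator hl hred fun i j hij => (htrans hij).conj h)
    (surjective_lift_conj hφ h) k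
  refine ⟨p.1, ?_⟩
  calc l k
      = wordLength l (signedGenerator (fun i => h * φ (of i) * h⁻¹) p) := by rw [hp, wordLength_of]
    _ = wordLength l (h * φ (of p.1) * h⁻¹) := wordLength_signedGenerator _ p
    _ = translationLength l (h * φ (of p.1) * h⁻¹) :=
        ((hred p.1).translationLength_eq_wordLength fun i => (hl i).le).symm
    _ = translationLength l (φ (of p.1)) := translationLength_conj _ h

/-- If a marked metric rose for `F_s = ⟨y_1, …, y_s⟩` (`s ≥ 2`), with marking
automorphism `φ` and positive petal lengths `l`, satisfies that every `y_i` has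
translation length `1` and every `y_i y_j` and `y_i y_j⁻¹` (`i < j`) has
translation length `2`, then every petal has length `1`. -/
theorem stmt_15 (S : ℕ) (hS : 2 ≤ S) (l : Fin S → ℝ) (hl : ∀ i, 0 < l i)
    (φ : MulAut (FreeGroup (Fin S)))
    (h1 : ∀ i, roseTransLength l (φ (FreeGroup.of i)) = 1)
    (h2 : ∀ i j : Fin S, i < j →
      roseTransLength l (φ (FreeGroup.of i * FreeGroup.of j)) = 2 ∧
      roseTransLength l (φ (FreeGroup.of i * (FreeGroup.of j)⁻¹)) = 2) :
    ∀ i, l i = 1 := by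
  simp only [MetricRose.roseTransLength_eq_translationLength, map_mul, map_inv] at h1 h2
  have hlt {i j : Fin S} (hij : i < j) :
      MetricRose.Transverse l (φ (FreeGroup.of i)) (φ (FreeGroup.of j)) := by
    constructor <;> simp only [h2 i j hij, h1, one_add_one_eq_two]
  intro k
  obtain ⟨i, hi⟩ := stmt_15_general hl φ.toMonoidHom φ.surjective (fun i => by simp)
    (fun i j hij => hij.lt_or_gt.elim hlt fun hji => (hlt hji).symm) k
  exact hi.trans (h1 i)
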